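/- For n ≥ 3, the subspace K^{2,2} = ker(Aa) ∩ ker(Ac) ⊆ 𝓗²⊗S² has dimension C(n+1,2)² − n·C(n+2,3) − C(n+1,2), and K^{2,2} = 0 for n = 1, 2. -/

import Mathlib

open MvPolynomial

/-- The physicists' Hermite polynomial `H_k`, satisfying the Rodrigues formula
`H_k(t) = (−1)^k e^{t²} (d/dt)^k e^{−t²}` (equivalently, `H_0 = 1`,
`H_{k+1} = 2X·H_k − H_k'`). -/
noncomputable def physHermite : ℕ → Polynomial ℝ
  | 0 => 1
  | (k + 1) => 2 * (Polynomial.X * physHermite k) - Polynomial.derivative (physHermite k)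

/-- The Hermite polynomial `H_I = H_{i₁}(y₁)⋯H_{iₙ}(yₙ)`, as a polynomial in the
variables `y₁,…,yₙ` (the `Sum.inl` variables) of `ℝ[y₁,…,yₙ,e¹,…,eⁿ]`. -/
noncomputable def HI {n : ℕ} (I : Fin n → ℕ) : MvPolynomial (Fin n ⊕ Fin n) ℝ :=
  ∏ i, Polynomial.aeval (X (Sum.inl i)) (physHermite (I i))

/-- The monomial `e^J = (e¹)^{j₁}⋯(eⁿ)^{jₙ}` in the symmetric-algebra variables
(the `Sum.inr` variables), spanning `S^p = Sym^p((ℝⁿ)*)` for `|J| = p`. -/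
noncomputable def eJ {n : ℕ} (J : Fin n → ℕ) : MvPolynomial (Fin n ⊕ Fin n) ℝ :=
  ∏ i, (X (Sum.inr i) : MvPolynomial (Fin n ⊕ Fin n) ℝ) ^ (J i)

/-- `𝓗^q ⊗ S^p`: the span of the vectors `H_I e^J` with `|I| = q`, `|J| = p`. -/
noncomputable def HS (n q p : ℕ) : Submodule ℝ (MvPolynomial (Fin n ⊕ Fin n) ℝ) :=
  Submodule.span ℝ
    {x | ∃ I J : Fin n → ℕ, (∑ i, I i) = q ∧ (∑ i, J i) = p ∧ x = HI I * eJ J}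

/-- The operator `Ac = Σ_k A_k ⊗ c_k`, where `A_k = (1/2)∂_{y_k}` and `c_k` is
symmetric multiplication by `e^k`. -/
noncomputable def acL (n : ℕ) :
    MvPolynomial (Fin n ⊕ Fin n) ℝ →ₗ[ℝ] MvPolynomial (Fin n ⊕ Fin n) ℝ :=
  ∑ k : Fin n, (1 / 2 : ℝ) •
    ((pderiv (Sum.inl k)).toLinearMap ∘ₗ LinearMap.mulLeft ℝ (X (Sum.inr k)))

/-- The operator `Aa = Σ_k A_k ⊗ a_k`, where `A_k = (1/2)∂_{y_k}` and `a_k = ∂_{e_k}` is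
contraction with `e_k`. -/
noncomputable def aaL (n : ℕ) :
    MvPolynomial (Fin n ⊕ Fin n) ℝ →ₗ[ℝ] MvPolynomial (Fin n ⊕ Fin n) ℝ :=
  ∑ k : Fin n, (1 / 2 : ℝ) •
    ((pderiv (Sum.inl k)).toLinearMap ∘ₗ (pderiv (Sum.inr k)).toLinearMap)

/-!
An element of `𝓗² ⊗ S²` is determined by its fourth derivatives
`t_{ij,kl} = ∂_{yᵢ} ∂_{yⱼ} ∂_{eₖ} ∂_{eₗ}` at the origin, and every tensor `t ∈ Sym² ⊗ Sym²` arises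
in this way. In terms of `t`, the operator `Ac` becomes the symmetrization over `j, k, l`, so that
`ker Ac` is the first Bianchi identity, and `Aa` becomes the trace `∑ₖ t_{ik,jk}`. Hence `K^{2,2}`
is the space of Weyl curvature tensors. The symmetrization is onto `V ⊗ Sym³`, and for `n ≥ 3` the
Kulkarni–Nomizu products with the metric realize every Ricci tensor on its kernel, so rank–nullity
gives the dimension. For `n ≤ 2` the Bianchi and trace identities leave no nonzero component.
-/

section CurvatureTensor

variable {ι R K : Type*} [CommRing R] [Field K]

section Bianchi

variable [DecidableEq ι]

/-- The total symmetrization of a tensor `t ∈ Sym² ⊗ Sym²` over its last three indices, with values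
in `V ⊗ Sym³`. The sum runs over the elements of a three-element multiset with multiplicity. Its
kernel is the space of tensors that satisfy the first Bianchi identity. -/
def bianchiSum : (Sym2 ι × Sym2 ι → R) →ₗ[R] (ι × Sym ι 3 → R) where
  toFun t p := ((p.2 : Multiset ι).attach.map fun j =>
    t (s(p.1, j.1), (Sym2.equivSym ι).symm (p.2.erase j.1 j.2))).sum
  map_add' _ _ := funext fun _ => Multiset.sum_map_add
  map_smul' _ _ := funext fun _ => Multiset.sum_map_mul_left

theorem equivSym_symm_erase {s : Sym ι 3} {a b c : ι} (ha : a ∈ s)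
    (hs : s = a ::ₛ b ::ₛ c ::ₛ Sym.nil) : (Sym2.equivSym ι).symm (s.erase a ha) = s(b, c) := by
  subst hs
  rw [Sym.erase_cons_head, Equiv.symm_apply_eq]
  rfl

theorem bianchiSum_apply_cons (t : Sym2 ι × Sym2 ι → R) (i j k l : ι) :
    bianchiSum t (i, j ::ₛ k ::ₛ l ::ₛ Sym.nil) =
      t (s(i, j), s(k, l)) + t (s(i, k), s(j, l)) + t (s(i, l), s(j, k)) := by
  have hk : j ::ₛ k ::ₛ l ::ₛ Sym.nil = k ::ₛ j ::ₛ l ::ₛ Sym.nil := Sym.cons_swap j k _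
  have hl : j ::ₛ k ::ₛ l ::ₛ Sym.nil = l ::ₛ j ::ₛ k ::ₛ Sym.nil := by
    rw [Sym.cons_swap k l, Sym.cons_swap j l]
  let pairWithout (a : ι) (ha : a ∈ j ::ₛ k ::ₛ l ::ₛ Sym.nil) : Sym2 ι :=
    (Sym2.equivSym ι).symm ((j ::ₛ k ::ₛ l ::ₛ Sym.nil).erase a ha)
  calc bianchiSum t (i, j ::ₛ k ::ₛ l ::ₛ Sym.nil)
      = t (s(i, j), pairWithout j (by simp)) + (t (s(i, k), pairWithout k (by simp)) +
          (t (s(i, l), pairWithout l (by simp)) + 0)) := rfl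
    _ = _ := by
      simp only [pairWithout, equivSym_symm_erase _ rfl, equivSym_symm_erase _ hk,
        equivSym_symm_erase _ hl, add_zero, add_assoc]

theorem bianchiSum_eq_zero_iff {t : Sym2 ι × Sym2 ι → R} :
    bianchiSum t = 0 ↔ ∀ i j k l,
      t (s(i, j), s(k, l)) + t (s(i, k), s(j, l)) + t (s(i, l), s(j, k)) = 0 := by
  simp only [← bianchiSum_apply_cons]
  refine ⟨fun h i j k l => congrFun h _, fun h => funext fun ⟨i, s⟩ => ?_⟩
  obtain ⟨j, s, rfl⟩ := s.exists_eq_cons_of_succ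
  obtain ⟨k, s, rfl⟩ := s.exists_eq_cons_of_succ
  obtain ⟨l, s, rfl⟩ := s.exists_eq_cons_of_succ
  rw [s.eq_nil_of_card_zero]
  exact h i j k l

end Bianchi

/-- The Kulkarni–Nomizu product of two symmetric `2`-tensors, written as a tensor in
`Sym² ⊗ Sym²` instead of `Λ² ⊗ Λ²`. -/
def kulkarniNomizu (g h : Sym2 ι → R) : Sym2 ι × Sym2 ι → R :=
  Function.uncurry <| Sym2.lift₂ ⟨fun i j k l =>
    2 * (g s(i, j) * h s(k, l) + h s(i, j) * g s(k, l)) -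
      (g s(i, k) * h s(j, l) + g s(i, l) * h s(j, k) +
        g s(j, k) * h s(i, l) + g s(j, l) * h s(i, k)),
    fun i j k l => by
      simp only [Sym2.eq_swap (a := j) (b := i), Sym2.eq_swap (a := l) (b := k)]
      constructor <;> ring⟩

theorem bianchiSum_kulkarniNomizu [DecidableEq ι] (g h : Sym2 ι → R) :
    bianchiSum (kulkarniNomizu g h) = 0 := by
  rw [bianchiSum_eq_zero_iff]
  intro i j k l
  simp only [kulkarniNomizu, Function.uncurry_apply_pair, Sym2.lift₂_mk,
    Sym2.eq_swap (a := k) (b := j), Sym2.eq_swap (a := l) (b := j), Sym2.eq_swap (a := l) (b := k)]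
  ring

theorem bianchiSum_surjective [DecidableEq ι] [CharZero K] :
    Function.Surjective (bianchiSum : (Sym2 ι × Sym2 ι → K) →ₗ[K] _) := by
  intro u
  let U (i j k l : ι) : K := u (i, j ::ₛ k ::ₛ l ::ₛ Sym.nil)
  have swap_left (i j k l : ι) : U i j k l = U i k j l := by simp only [U, Sym.cons_swap j k]
  have swap_right (i j k l : ι) : U i j k l = U i j l k := by simp only [U, Sym.cons_swap k l]
  let t : Sym2 ι × Sym2 ι → K := Function.uncurry <| Sym2.lift₂
    ⟨fun i j k l => (2 * U i j k l + 2 * U j i k l - U k i j l - U l i j k) / 6, fun i j k l => by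
      constructor
      · linear_combination (swap_left k j i l + swap_left l j i k) / 6
      · linear_combination (swap_right i j k l + swap_right j i k l) / 3⟩
  refine ⟨t, funext fun ⟨i, s⟩ => ?_⟩
  obtain ⟨j, s, rfl⟩ := s.exists_eq_cons_of_succ
  obtain ⟨k, s, rfl⟩ := s.exists_eq_cons_of_succ
  obtain ⟨l, s, rfl⟩ := s.exists_eq_cons_of_succ
  rw [s.eq_nil_of_card_zero, bianchiSum_apply_cons]
  change _ = U i j k l
  simp only [t, Function.uncurry_apply_pair, Sym2.lift₂_mk]
  rw [swap_left i k j l, swap_left i l j k, swap_right i j l k, swap_right k i l j,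
    swap_right j i l k, swap_right l i k j]
  ring

section PairSymmetry

variable [DecidableEq ι]

theorem apply_diag_diag_of_bianchiSum_eq_zero {t : Sym2 ι × Sym2 ι → R} (ht : bianchiSum t = 0)
    (a b : ι) :
    t (s(a, a), s(b, b)) = -2 * t (s(a, b), s(a, b)) := by
  linear_combination bianchiSum_eq_zero_iff.1 ht a a b b

variable [CharZero K] {t : Sym2 ι × Sym2 ι → K}

theorem apply_swap_of_bianchiSum_eq_zero (ht : bianchiSum t = 0) (p q : Sym2 ι) :
    t (p, q) = t (q, p) := by
  rw [bianchiSum_eq_zero_iff] at ht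
  induction p with | _ i j
  induction q with | _ k l
  have hi := ht i j k l
  have hj := ht j i k l
  have hk := ht k l i j
  have hl := ht l k i j
  simp only [Sym2.eq_swap (a := j) (b := i), Sym2.eq_swap (a := l) (b := k),
    Sym2.eq_swap (a := k) (b := i), Sym2.eq_swap (a := k) (b := j),
    Sym2.eq_swap (a := l) (b := i), Sym2.eq_swap (a := l) (b := j)] at hi hj hk hl
  linear_combination (hi + hj - hk - hl) / 2

theorem apply_self_self_of_bianchiSum_eq_zero (ht : bianchiSum t = 0) (a b : ι) :
    t (s(a, a), s(a, b)) = 0 := by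
  have hpair := apply_swap_of_bianchiSum_eq_zero ht s(a, a) s(a, b)
  have haab := bianchiSum_eq_zero_iff.1 ht a a a b
  linear_combination (haab + hpair) / 3

end PairSymmetry

section Metric

variable [DecidableEq ι]

/-- The standard Euclidean metric `∑ᵢ eⁱ ⊗ eⁱ`. -/
def euclideanMetric (p : Sym2 ι) : R := if p.IsDiag then 1 else 0

theorem euclideanMetric_apply (i j : ι) :
    euclideanMetric s(i, j) = (if i = j then 1 else 0 : R) := by
  simp [euclideanMetric]

end Metric

section Ricci

variable [Fintype ι]

/-- Twice the symmetric part of the contraction of the two middle indices of a tensor in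
`Sym² ⊗ Sym²`. -/
def ricci : (Sym2 ι × Sym2 ι → R) →ₗ[R] (Sym2 ι → R) where
  toFun t := Sym2.lift ⟨fun i j => ∑ k, t (s(i, k), s(j, k)) + ∑ k, t (s(j, k), s(i, k)),
    fun _ _ => add_comm _ _⟩
  map_add' t u := funext <| Sym2.ind fun i j => by simp [Finset.sum_add_distrib, add_add_add_comm]
  map_smul' c t := funext <| Sym2.ind fun i j => by simp [← Finset.mul_sum, ← mul_add]

theorem ricci_apply (t : Sym2 ι × Sym2 ι → R) (i j : ι) :
    ricci t s(i, j) = ∑ k, t (s(i, k), s(j, k)) + ∑ k, t (s(j, k), s(i, k)) := rfl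

variable [DecidableEq ι]

theorem sum_kulkarniNomizu_euclideanMetric (h : Sym2 ι → R) (i j : ι) :
    ∑ k, kulkarniNomizu euclideanMetric h (s(i, k), s(j, k)) =
      (2 - Fintype.card ι) * h s(i, j) - (∑ k, h s(k, k)) * euclideanMetric s(i, j) := by
  simp only [kulkarniNomizu, Function.uncurry_apply_pair, Sym2.lift₂_mk, euclideanMetric_apply,
    Finset.sum_sub_distrib, Finset.sum_add_distrib, ← Finset.mul_sum]
  simp only [ite_mul, one_mul, zero_mul, Finset.sum_ite_eq, Finset.mem_univ, if_true,
    Sym2.eq_swap (a := j) (b := i), mul_ite, mul_one, mul_zero, Finset.sum_ite_eq',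
    Finset.sum_const, Finset.card_univ, nsmul_eq_mul]
  ring

theorem ricci_kulkarniNomizu_euclideanMetric (h : Sym2 ι → R) (i j : ι) :
    ricci (kulkarniNomizu euclideanMetric h) s(i, j) =
      2 * ((2 - Fintype.card ι) * h s(i, j) - (∑ k, h s(k, k)) * euclideanMetric s(i, j)) := by
  rw [ricci_apply, sum_kulkarniNomizu_euclideanMetric, sum_kulkarniNomizu_euclideanMetric,
    Sym2.eq_swap (a := j)]
  ring

theorem exists_ricci_kulkarniNomizu_eq [CharZero K] (hι : 3 ≤ Fintype.card ι) (r : Sym2 ι → K) :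
    ∃ h, ricci (kulkarniNomizu euclideanMetric h) = r := by
  obtain ⟨n, hn⟩ : ∃ n, Fintype.card ι = n := ⟨_, rfl⟩
  have hn₁ : (1 - n : K) ≠ 0 := sub_ne_zero.2 (by norm_cast; lia)
  have hn₂ : (2 - n : K) ≠ 0 := sub_ne_zero.2 (by norm_cast; lia)
  -- Taking traces in `2 ((2 - n) h - (tr h) g) = r` determines `τ = tr h`.
  let τ : K := (∑ k, r s(k, k)) / (4 * (1 - n))
  let h : Sym2 ι → K := fun p => (r p / 2 + τ * euclideanMetric p) / (2 - n)
  have trace_h : ∑ k, h s(k, k) = τ := by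
    simp only [h, ← Finset.sum_div, Finset.sum_add_distrib, euclideanMetric_apply, if_true, mul_one,
      Finset.sum_const, Finset.card_univ, hn, nsmul_eq_mul]
    simp only [τ]
    field_simp
    ring
  refine ⟨h, funext <| Sym2.ind fun i j => ?_⟩
  rw [ricci_kulkarniNomizu_euclideanMetric, trace_h, hn]
  simp only [h]
  field_simp
  ring

theorem prod_bianchiSum_ricci_surjective [CharZero K] (hι : 3 ≤ Fintype.card ι) :
    Function.Surjective (LinearMap.prod (bianchiSum (ι := ι) (R := K)) ricci) := by
  rintro ⟨u, r⟩
  obtain ⟨t, ht⟩ := bianchiSum_surjective u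
  obtain ⟨h, hh⟩ := exists_ricci_kulkarniNomizu_eq hι (r - ricci t)
  refine ⟨t + kulkarniNomizu euclideanMetric h, Prod.ext ?_ ?_⟩
  · simp [ht, bianchiSum_kulkarniNomizu]
  · simp [hh]

theorem forall_trace_eq_zero_iff_ricci_eq_zero [CharZero K] {t : Sym2 ι × Sym2 ι → K}
    (ht : bianchiSum t = 0) :
    (∀ i j, ∑ k, t (s(i, k), s(j, k)) = 0) ↔ ricci t = 0 := by
  have ricci_eq (i j : ι) : ricci t s(i, j) = 2 * ∑ k, t (s(i, k), s(j, k)) := by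
    simp only [ricci_apply, apply_swap_of_bianchiSum_eq_zero ht s(j, _), ← two_mul]
  simp [funext_iff, Sym2.forall, ricci_eq]

variable (ι R) in
/-- The Weyl tensors: the totally trace-free tensors that satisfy the first Bianchi identity, where
curvature tensors are written in `Sym² ⊗ Sym²`. -/
def weylTensors : Submodule R (Sym2 ι × Sym2 ι → R) :=
  LinearMap.ker (LinearMap.prod bianchiSum ricci)

theorem mem_weylTensors {t : Sym2 ι × Sym2 ι → R} :
    t ∈ weylTensors ι R ↔ bianchiSum t = 0 ∧ ricci t = 0 := by
  simp [weylTensors]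

theorem finrank_weylTensors [CharZero K] (hι : 3 ≤ Fintype.card ι) :
    Fintype.card ι * (Fintype.card ι + 2).choose 3 + (Fintype.card ι + 1).choose 2 +
        Module.finrank K (weylTensors ι K) =
      (Fintype.card ι + 1).choose 2 ^ 2 := by
  have rank_nullity := LinearMap.finrank_range_add_finrank_ker
    (LinearMap.prod (bianchiSum (ι := ι) (R := K)) ricci)
  rw [LinearMap.range_eq_top.2 (prod_bianchiSum_ricci_surjective hι), finrank_top,
    Module.finrank_prod, Module.finrank_fintype_fun_eq_card, Module.finrank_fintype_fun_eq_card,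
    Module.finrank_fintype_fun_eq_card, Fintype.card_prod, Fintype.card_prod, Sym2.card,
    Sym.card_sym_eq_choose, Nat.add_sub_assoc (by simp)] at rank_nullity
  rw [weylTensors, rank_nullity, sq]

section CardLeTwo

theorem eq_or_eq_or_eq_of_card_le_two {α : Type*} [Fintype α] (hα : Fintype.card α ≤ 2)
    (a b c : α) : a = b ∨ a = c ∨ b = c := by
  by_contra! hne
  exact hα.not_gt (Fintype.two_lt_card_iff.2 ⟨a, b, c, hne⟩)

variable [CharZero K] {t : Sym2 ι × Sym2 ι → K}

theorem apply_pair_pair_of_mem_weylTensors (ht : t ∈ weylTensors ι K) (hι : Fintype.card ι ≤ 2)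
    (a b : ι) : t (s(a, b), s(a, b)) = 0 := by
  obtain ⟨hbianchi, hricci⟩ := mem_weylTensors.1 ht
  obtain rfl | hab := eq_or_ne a b
  · exact apply_self_self_of_bianchiSum_eq_zero hbianchi a a
  have huniv : (Finset.univ : Finset ι) = {a, b} := by
    ext c
    grind [eq_or_eq_or_eq_of_card_le_two hι a b c]
  have htrace := (forall_trace_eq_zero_iff_ricci_eq_zero hbianchi).2 hricci a a
  rwa [huniv, Finset.sum_pair hab, apply_self_self_of_bianchiSum_eq_zero hbianchi,
    zero_add] at htrace

theorem weylTensors_eq_bot (hι : Fintype.card ι ≤ 2) : weylTensors ι K = ⊥ := by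
  refine (Submodule.eq_bot_iff _).2 fun t ht => funext fun ⟨p, q⟩ => ?_
  have hbianchi := (mem_weylTensors.1 ht).1
  have hpair := apply_pair_pair_of_mem_weylTensors ht hι
  have diag_left (a : ι) (r : Sym2 ι) : t (s(a, a), r) = 0 := by
    induction r with | _ b c
    obtain rfl | rfl | rfl := eq_or_eq_or_eq_of_card_le_two hι a b c
    · exact apply_self_self_of_bianchiSum_eq_zero hbianchi a c
    · rw [Sym2.eq_swap (a := b), apply_self_self_of_bianchiSum_eq_zero hbianchi]
    · rw [apply_diag_diag_of_bianchiSum_eq_zero hbianchi, hpair, mul_zero]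
  induction p with | _ i j
  obtain rfl | hij := eq_or_ne i j
  · exact diag_left i q
  induction q with | _ k l
  obtain rfl | hkl := eq_or_ne k l
  · rw [apply_swap_of_bianchiSum_eq_zero hbianchi, diag_left, Pi.zero_apply]
  have hpairs_eq : s(k, l) = s(i, j) := by
    grind [eq_or_eq_or_eq_of_card_le_two hι i j k, eq_or_eq_or_eq_of_card_le_two hι i j l]
  rw [hpairs_eq, hpair, Pi.zero_apply]

end CardLeTwo

end Ricci

end CurvatureTensor

section PiSingle

variable {ι : Type*} [DecidableEq ι] {k : ι} {I : ι → ℕ}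

theorem sub_single_add_single (hk : I k ≠ 0) : I - Pi.single k 1 + Pi.single k 1 = I := by
  ext i
  obtain rfl | hi := eq_or_ne i k
  · simp [Nat.sub_one_add_one hk]
  · simp [hi]

variable [Fintype ι]

theorem sum_sub_single {q : ℕ} (hk : I k ≠ 0) (hI : ∑ i, I i = q + 1) :
    ∑ i, (I - Pi.single k 1 : ι → ℕ) i = q := by
  rw [← sub_single_add_single hk] at hI
  simpa [Finset.sum_add_distrib] using hI

theorem prod_eq_mul_prod_erase_of_eq_off {M : Type*} [CommMonoid M] {f g : ι → M} (k : ι)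
    (h : ∀ i ≠ k, f i = g i) : ∏ i, f i = f k * ∏ i ∈ Finset.univ.erase k, g i := by
  rw [← Finset.mul_prod_erase _ _ (Finset.mem_univ k)]
  exact congrArg _ <| Finset.prod_congr rfl fun i hi => h i (Finset.ne_of_mem_erase hi)

end PiSingle

section PDeriv

variable {ι σ R : Type*}

theorem pderiv_comm [CommRing R] (a b : σ) (x : MvPolynomial σ R) :
    pderiv a (pderiv b x) = pderiv b (pderiv a x) := by
  classical
  have commutator_eq_zero :
      ⁅(pderiv a : Derivation R (MvPolynomial σ R) (MvPolynomial σ R)), pderiv b⁆ = 0 :=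
    derivation_ext fun c => by
      rw [Derivation.commutator_apply]
      simp [pderiv_X, Pi.single_apply, apply_ite]
  rw [← sub_eq_zero, ← Derivation.commutator_apply, commutator_eq_zero, Derivation.zero_apply]

variable [CommSemiring R]

theorem pderiv_pderiv_X_mul_X [DecidableEq σ] (a b c d : σ) :
    pderiv a (pderiv b (X c * X d : MvPolynomial σ R)) =
      C ((if c = a ∧ d = b then 1 else 0) + if c = b ∧ d = a then 1 else 0) := by
  simp only [Derivation.leibniz, pderiv_X, Pi.single_apply, smul_eq_mul, mul_ite, mul_one, mul_zero,
    map_add, apply_ite (pderiv a), map_zero, ite_and, apply_ite C, C_1]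
  split_ifs <;> rfl

theorem pderiv_prod_aeval_X_eq_zero {s : Finset ι} {v : ι → σ} {a : σ} (ha : ∀ i ∈ s, v i ≠ a)
    (P : ι → Polynomial R) :
    pderiv a (∏ i ∈ s, Polynomial.aeval (X (v i) : MvPolynomial σ R) (P i)) = 0 :=
  Finset.prod_induction _ (fun x => pderiv a x = 0) (fun x y hx hy => by simp [hx, hy])
    pderiv_one fun i hi => by rw [Derivation.map_aeval, pderiv_X_of_ne (ha i hi), smul_zero]

theorem pderiv_prod_aeval_X [Fintype ι] [DecidableEq ι] {v : ι → σ} (hv : Function.Injective v)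
    (P : ι → Polynomial R) (k : ι) :
    pderiv (v k) (∏ i, Polynomial.aeval (X (v i) : MvPolynomial σ R) (P i)) =
      Polynomial.aeval (X (v k)) (Polynomial.derivative (P k)) *
        ∏ i ∈ Finset.univ.erase k, Polynomial.aeval (X (v i)) (P i) := by
  rw [← Finset.mul_prod_erase _ _ (Finset.mem_univ k), Derivation.leibniz,
    pderiv_prod_aeval_X_eq_zero fun i hi => hv.ne (Finset.ne_of_mem_erase hi),
    Derivation.map_aeval, pderiv_X_self]
  simp [mul_comm]

end PDeriv

section Hermite

theorem derivative_physHermite (k : ℕ) :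
    Polynomial.derivative (physHermite k) = (2 * k : ℝ) • physHermite (k - 1) := by
  induction k with
  | zero => simp [physHermite]
  | succ k ih =>
    have hsecond : Polynomial.derivative (Polynomial.derivative (physHermite k)) =
        (2 * k : ℝ) • (2 * (Polynomial.X * physHermite (k - 1)) - physHermite k) := by
      cases k with
      | zero => simp [physHermite]
      | succ k => rw [ih]; simp [physHermite]
    rw [physHermite, map_sub, Polynomial.derivative_mul, Polynomial.derivative_mul, hsecond, ih]
    simp only [Polynomial.smul_eq_C_mul, Polynomial.derivative_ofNat, Polynomial.derivative_X,
      map_mul, map_add, map_ofNat, map_one, Nat.cast_succ, Nat.add_sub_cancel]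
    ring

variable {n : ℕ} (k : Fin n) (I J : Fin n → ℕ)

theorem pderiv_inl_HI :
    pderiv (Sum.inl k) (HI I) = (2 * I k : ℝ) • HI (I - Pi.single k 1) := by
  have hlower : HI (I - Pi.single k 1) =
      Polynomial.aeval (X (Sum.inl k)) (physHermite (I k - 1)) *
        ∏ i ∈ Finset.univ.erase k, Polynomial.aeval (X (Sum.inl i)) (physHermite (I i)) := by
    rw [HI, prod_eq_mul_prod_erase_of_eq_off k fun i hi => by
      rw [Pi.sub_apply, Pi.single_eq_of_ne hi, Nat.sub_zero]]
    simp
  rw [HI, pderiv_prod_aeval_X Sum.inl_injective, derivative_physHermite, hlower, map_smul,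
    smul_mul_assoc]

theorem HI_add_single :
    HI (I + Pi.single k 1) = 2 * (X (Sum.inl k) * HI I) - pderiv (Sum.inl k) (HI I) := by
  rw [HI, HI, pderiv_prod_aeval_X Sum.inl_injective,
    prod_eq_mul_prod_erase_of_eq_off k fun i hi => by
      rw [Pi.add_apply, Pi.single_eq_of_ne hi, Nat.add_zero],
    ← Finset.mul_prod_erase _ _ (Finset.mem_univ k), Pi.add_apply, Pi.single_eq_same, physHermite]
  simp only [map_sub, map_mul, map_ofNat, Polynomial.aeval_X]
  ring

theorem pderiv_inr_HI : pderiv (Sum.inr k) (HI I) = 0 :=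
  pderiv_prod_aeval_X_eq_zero (fun _ _ => Sum.inl_ne_inr) _

theorem eJ_eq_prod_aeval : eJ J =
    ∏ i, Polynomial.aeval (X (Sum.inr i)) ((Polynomial.X : Polynomial ℝ) ^ J i) := by
  simp [eJ]

theorem pderiv_inl_eJ : pderiv (Sum.inl k) (eJ J) = 0 := by
  rw [eJ_eq_prod_aeval]
  exact pderiv_prod_aeval_X_eq_zero (fun _ _ => Sum.inr_ne_inl) _

theorem pderiv_inr_eJ :
    pderiv (Sum.inr k) (eJ J) = (J k : ℝ) • eJ (J - Pi.single k 1) := by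
  have hlower : eJ (J - Pi.single k 1) = X (Sum.inr k) ^ (J k - 1) *
      ∏ i ∈ Finset.univ.erase k, X (Sum.inr i) ^ J i := by
    rw [eJ, prod_eq_mul_prod_erase_of_eq_off k fun i hi => by
      rw [Pi.sub_apply, Pi.single_eq_of_ne hi, Nat.sub_zero]]
    simp
  rw [eJ_eq_prod_aeval, pderiv_prod_aeval_X Sum.inr_injective, hlower]
  simp [smul_eq_C_mul, Polynomial.derivative_X_pow, mul_assoc]

theorem eJ_add_single : eJ (J + Pi.single k 1) = X (Sum.inr k) * eJ J := by
  rw [eJ, eJ, prod_eq_mul_prod_erase_of_eq_off k fun i hi => by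
      rw [Pi.add_apply, Pi.single_eq_of_ne hi, Nat.add_zero],
    ← Finset.mul_prod_erase _ _ (Finset.mem_univ k), Pi.add_apply, Pi.single_eq_same, pow_succ',
    mul_assoc]

theorem HI_hermite_equation :
    2 * (X (Sum.inl k) * pderiv (Sum.inl k) (HI I)) -
      pderiv (Sum.inl k) (pderiv (Sum.inl k) (HI I)) = (2 * I k : ℝ) • HI I := by
  obtain hk | hk := eq_or_ne (I k) 0
  · simp [pderiv_inl_HI, hk]
  · conv_rhs => rw [← sub_single_add_single hk, HI_add_single]
    rw [pderiv_inl_HI, Derivation.map_smul, mul_smul_comm, mul_smul_comm, ← smul_sub,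
      sub_single_add_single hk]

theorem eJ_euler_equation : X (Sum.inr k) * pderiv (Sum.inr k) (eJ J) = (J k : ℝ) • eJ J := by
  obtain hk | hk := eq_or_ne (J k) 0
  · simp [pderiv_inr_eJ, hk]
  · rw [pderiv_inr_eJ, mul_smul_comm, ← eJ_add_single, sub_single_add_single hk]

end Hermite

section HermiteSymmetric

variable {n q p : ℕ} {x : MvPolynomial (Fin n ⊕ Fin n) ℝ}

theorem HI_mul_eJ_mem_HS {I J : Fin n → ℕ} (hI : ∑ i, I i = q) (hJ : ∑ i, J i = p) :
    HI I * eJ J ∈ HS n q p :=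
  Submodule.subset_span ⟨I, J, hI, hJ, rfl⟩

theorem HS_le_iff {N : Submodule ℝ (MvPolynomial (Fin n ⊕ Fin n) ℝ)} :
    HS n q p ≤ N ↔
      ∀ I J : Fin n → ℕ, ∑ i, I i = q → ∑ i, J i = p → HI I * eJ J ∈ N := by
  refine Submodule.span_le.trans ⟨fun h I J hI hJ => h ⟨I, J, hI, hJ, rfl⟩, ?_⟩
  rintro h _ ⟨I, J, hI, hJ, rfl⟩
  exact h I J hI hJ

theorem pderiv_inl_mem_HS (k : Fin n) (hx : x ∈ HS n (q + 1) p) :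
    pderiv (Sum.inl k) x ∈ HS n q p := by
  suffices h : HS n (q + 1) p ≤ (HS n q p).comap (pderiv (Sum.inl k)).toLinearMap from h hx
  refine HS_le_iff.2 fun I J hI hJ => ?_
  have hpderiv : pderiv (Sum.inl k) (HI I * eJ J) =
      (2 * I k : ℝ) • (HI (I - Pi.single k 1) * eJ J) := by
    rw [pderiv_mul, pderiv_inl_eJ, mul_zero, add_zero, pderiv_inl_HI, smul_mul_assoc]
  change pderiv (Sum.inl k) (HI I * eJ J) ∈ HS n q p
  rw [hpderiv]
  obtain hk | hk := eq_or_ne (I k) 0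
  · simp [hk]
  · exact Submodule.smul_mem _ _ (HI_mul_eJ_mem_HS (sum_sub_single hk hI) hJ)

theorem pderiv_inr_mem_HS (k : Fin n) (hx : x ∈ HS n q (p + 1)) :
    pderiv (Sum.inr k) x ∈ HS n q p := by
  suffices h : HS n q (p + 1) ≤ (HS n q p).comap (pderiv (Sum.inr k)).toLinearMap from h hx
  refine HS_le_iff.2 fun I J hI hJ => ?_
  have hpderiv : pderiv (Sum.inr k) (HI I * eJ J) =
      (J k : ℝ) • (HI I * eJ (J - Pi.single k 1)) := by
    rw [pderiv_mul, pderiv_inr_HI, zero_mul, zero_add, pderiv_inr_eJ, mul_smul_comm]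
  change pderiv (Sum.inr k) (HI I * eJ J) ∈ HS n q p
  rw [hpderiv]
  obtain hk | hk := eq_or_ne (J k) 0
  · simp [hk]
  · exact Submodule.smul_mem _ _ (HI_mul_eJ_mem_HS hI (sum_sub_single hk hJ))

theorem X_inr_mul_mem_HS (k : Fin n) (hx : x ∈ HS n q p) :
    X (Sum.inr k) * x ∈ HS n q (p + 1) := by
  suffices h : HS n q p ≤ (HS n q (p + 1)).comap (LinearMap.mulLeft ℝ (X (Sum.inr k))) from h hx
  refine HS_le_iff.2 fun I J hI hJ => ?_
  change X (Sum.inr k) * (HI I * eJ J) ∈ HS n q (p + 1)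
  rw [mul_left_comm, ← eJ_add_single]
  exact HI_mul_eJ_mem_HS hI (by simp [Finset.sum_add_distrib, hJ])

theorem sum_hermite_equation_of_mem_HS (hx : x ∈ HS n q p) :
    ∑ k, (2 * (X (Sum.inl k) * pderiv (Sum.inl k) x) -
      pderiv (Sum.inl k) (pderiv (Sum.inl k) x)) = (2 * q : ℝ) • x := by
  induction hx using Submodule.span_induction with
  | mem x hx =>
    obtain ⟨I, J, hI, -, rfl⟩ := hx
    have hterm (k : Fin n) : 2 * (X (Sum.inl k) * pderiv (Sum.inl k) (HI I * eJ J)) -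
        pderiv (Sum.inl k) (pderiv (Sum.inl k) (HI I * eJ J)) = (2 * I k : ℝ) • (HI I * eJ J) := by
      rw [← smul_mul_assoc, ← HI_hermite_equation]
      simp only [pderiv_mul, pderiv_inl_eJ, mul_zero, add_zero]
      ring
    simp only [hterm, ← Finset.sum_smul, ← Finset.mul_sum, ← Nat.cast_sum, hI]
  | zero => simp
  | add x y _ _ hx hy =>
    rw [smul_add, ← hx, ← hy, ← Finset.sum_add_distrib]
    exact Finset.sum_congr rfl fun k _ => by simp only [map_add]; ring
  | smul c x _ hx =>
    rw [smul_comm, ← hx, Finset.smul_sum]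
    simp only [Derivation.map_smul, mul_smul_comm, smul_sub]

theorem sum_euler_equation_of_mem_HS (hx : x ∈ HS n q p) :
    ∑ k, X (Sum.inr k) * pderiv (Sum.inr k) x = (p : ℝ) • x := by
  induction hx using Submodule.span_induction with
  | mem x hx =>
    obtain ⟨I, J, -, hJ, rfl⟩ := hx
    have hterm (k : Fin n) :
        X (Sum.inr k) * pderiv (Sum.inr k) (HI I * eJ J) = (J k : ℝ) • (HI I * eJ J) := by
      rw [← mul_smul_comm, ← eJ_euler_equation, pderiv_mul, pderiv_inr_HI]
      ring
    simp only [hterm, ← Finset.sum_smul, ← Nat.cast_sum, hJ]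
  | zero => simp
  | add x y _ _ hx hy => simp only [map_add, mul_add, Finset.sum_add_distrib, hx, hy, smul_add]
  | smul c x _ hx =>
    rw [smul_comm, ← hx, Finset.smul_sum]
    simp only [Derivation.map_smul, mul_smul_comm]

theorem eq_zero_of_pderiv_inl_eq_zero (hx : x ∈ HS n (q + 1) p)
    (h : ∀ k, pderiv (Sum.inl k) x = 0) : x = 0 := by
  have hnumber := sum_hermite_equation_of_mem_HS hx
  simp only [h, map_zero, mul_zero, sub_zero, Finset.sum_const_zero] at hnumber
  exact (smul_eq_zero.1 hnumber.symm).resolve_left (by positivity)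

theorem eq_zero_of_pderiv_inr_eq_zero (hx : x ∈ HS n q (p + 1))
    (h : ∀ k, pderiv (Sum.inr k) x = 0) : x = 0 := by
  have heuler := sum_euler_equation_of_mem_HS hx
  simp only [h, mul_zero, Finset.sum_const_zero] at heuler
  exact (smul_eq_zero.1 heuler.symm).resolve_left (by positivity)

theorem HI_zero : HI (0 : Fin n → ℕ) = 1 := by
  simp [HI, physHermite]

theorem eJ_zero : eJ (0 : Fin n → ℕ) = 1 := by
  simp [eJ]

theorem eq_zero_of_mem_HS_zero_zero (hx : x ∈ HS n 0 0) (h : constantCoeff x = 0) : x = 0 := by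
  have hconst : HS n 0 0 ≤ ℝ ∙ 1 := HS_le_iff.2 fun I J hI hJ => by
    obtain rfl : I = 0 := funext (by simpa using hI)
    obtain rfl : J = 0 := funext (by simpa using hJ)
    rw [HI_zero, eJ_zero, one_mul]
    exact Submodule.mem_span_singleton_self 1
  obtain ⟨c, rfl⟩ := Submodule.mem_span_singleton.1 (hconst hx)
  have hc : c = 0 := by simpa [constantCoeff_smul] using h
  rw [hc, zero_smul]

theorem acL_apply (x : MvPolynomial (Fin n ⊕ Fin n) ℝ) :
    acL n x = (1 / 2 : ℝ) • ∑ k, X (Sum.inr k) * pderiv (Sum.inl k) x := by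
  simp [acL, Finset.smul_sum]

theorem aaL_apply (x : MvPolynomial (Fin n ⊕ Fin n) ℝ) :
    aaL n x = (1 / 2 : ℝ) • ∑ k, pderiv (Sum.inl k) (pderiv (Sum.inr k) x) := by
  simp [aaL, Finset.smul_sum]

theorem acL_mem_HS (hx : x ∈ HS n (q + 1) p) : acL n x ∈ HS n q (p + 1) := by
  rw [acL_apply]
  exact Submodule.smul_mem _ _ <|
    Submodule.sum_mem _ fun k _ => X_inr_mul_mem_HS k (pderiv_inl_mem_HS k hx)

theorem aaL_mem_HS (hx : x ∈ HS n (q + 1) (p + 1)) : aaL n x ∈ HS n q p := by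
  rw [aaL_apply]
  exact Submodule.smul_mem _ _ <|
    Submodule.sum_mem _ fun k _ => pderiv_inl_mem_HS k (pderiv_inr_mem_HS k hx)

theorem constantCoeff_acL (x : MvPolynomial (Fin n ⊕ Fin n) ℝ) : constantCoeff (acL n x) = 0 := by
  simp [acL_apply, constantCoeff_smul]

theorem pderiv_inl_acL (i : Fin n) (x : MvPolynomial (Fin n ⊕ Fin n) ℝ) :
    pderiv (Sum.inl i) (acL n x) = acL n (pderiv (Sum.inl i) x) := by
  simp [acL_apply, pderiv_comm (Sum.inl i)]

theorem pderiv_inr_acL (i : Fin n) (x : MvPolynomial (Fin n ⊕ Fin n) ℝ) :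
    pderiv (Sum.inr i) (acL n x) =
      (1 / 2 : ℝ) • pderiv (Sum.inl i) x + acL n (pderiv (Sum.inr i) x) := by
  simp [acL_apply, pderiv_comm (Sum.inr i), pderiv_X, Pi.single_apply, Finset.sum_add_distrib,
    add_comm]

end HermiteSymmetric

section MixedHessian

variable {n : ℕ} {x : MvPolynomial (Fin n ⊕ Fin n) ℝ}

/-- The tensor of the fourth derivatives `∂_{yᵢ} ∂_{yⱼ} ∂_{eₖ} ∂_{eₗ}` at the origin. It determines
an element of `𝓗² ⊗ S²`, and its two arguments are the unordered pairs `{i, j}` and `{k, l}`. -/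
noncomputable def mixedHessian :
    MvPolynomial (Fin n ⊕ Fin n) ℝ →ₗ[ℝ] (Sym2 (Fin n) × Sym2 (Fin n) → ℝ) where
  toFun x := Function.uncurry <| Sym2.lift₂ ⟨fun i j k l => constantCoeff
    (pderiv (Sum.inl i) (pderiv (Sum.inl j) (pderiv (Sum.inr k) (pderiv (Sum.inr l) x)))),
    fun i j k l => ⟨congrArg _ (pderiv_comm _ _ _), by simp only [pderiv_comm (Sum.inr k)]⟩⟩
  map_add' x y := by
    ext ⟨⟨i, j⟩, ⟨k, l⟩⟩
    simp
  map_smul' c x := by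
    ext ⟨⟨i, j⟩, ⟨k, l⟩⟩
    simp [constantCoeff_smul]

theorem mixedHessian_apply (x : MvPolynomial (Fin n ⊕ Fin n) ℝ) (i j k l : Fin n) :
    mixedHessian x (s(i, j), s(k, l)) = constantCoeff
      (pderiv (Sum.inl i) (pderiv (Sum.inl j) (pderiv (Sum.inr k) (pderiv (Sum.inr l) x)))) :=
  rfl

theorem constantCoeff_pderiv_acL (x : MvPolynomial (Fin n ⊕ Fin n) ℝ) (i j k l : Fin n) :
    constantCoeff (pderiv (Sum.inl i) (pderiv (Sum.inr j)
      (pderiv (Sum.inr k) (pderiv (Sum.inr l) (acL n x))))) =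
    1 / 2 * bianchiSum (mixedHessian x) (i, j ::ₛ k ::ₛ l ::ₛ Sym.nil) := by
  simp only [pderiv_inr_acL, pderiv_inl_acL, map_add, Derivation.map_smul, constantCoeff_acL,
    constantCoeff_smul, bianchiSum_apply_cons, mixedHessian_apply, smul_eq_mul,
    pderiv_comm (Sum.inr _) (Sum.inl _)]
  ring

theorem constantCoeff_pderiv_aaL (x : MvPolynomial (Fin n ⊕ Fin n) ℝ) (i j : Fin n) :
    constantCoeff (pderiv (Sum.inl i) (pderiv (Sum.inr j) (aaL n x))) =
      1 / 2 * ∑ k, mixedHessian x (s(i, k), s(j, k)) := by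
  simp only [aaL_apply, Derivation.map_smul, map_sum, constantCoeff_smul, smul_eq_mul,
    mixedHessian_apply, pderiv_comm (Sum.inr j) (Sum.inl _)]

theorem eq_zero_of_mixedHessian_eq_zero (hx : x ∈ HS n 2 2) (h : mixedHessian x = 0) : x = 0 :=
  eq_zero_of_pderiv_inr_eq_zero hx fun l =>
  have hl := pderiv_inr_mem_HS l hx
  eq_zero_of_pderiv_inr_eq_zero hl fun k =>
  have hk := pderiv_inr_mem_HS k hl
  eq_zero_of_pderiv_inl_eq_zero hk fun j =>
  have hj := pderiv_inl_mem_HS j hk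
  eq_zero_of_pderiv_inl_eq_zero hj fun i =>
  eq_zero_of_mem_HS_zero_zero (pderiv_inl_mem_HS i hj) (congrFun h (s(i, j), s(k, l)))

theorem acL_eq_zero_iff (hx : x ∈ HS n 2 2) : acL n x = 0 ↔ bianchiSum (mixedHessian x) = 0 := by
  refine ⟨fun h => bianchiSum_eq_zero_iff.2 fun i j k l => ?_, fun h => ?_⟩
  · rw [← bianchiSum_apply_cons]
    simpa [h] using constantCoeff_pderiv_acL x i j k l
  · have h₀ := acL_mem_HS hx
    refine eq_zero_of_pderiv_inr_eq_zero h₀ fun l => ?_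
    have hl := pderiv_inr_mem_HS l h₀
    refine eq_zero_of_pderiv_inr_eq_zero hl fun k => ?_
    have hk := pderiv_inr_mem_HS k hl
    refine eq_zero_of_pderiv_inr_eq_zero hk fun j => ?_
    have hj := pderiv_inr_mem_HS j hk
    refine eq_zero_of_pderiv_inl_eq_zero hj fun i => ?_
    refine eq_zero_of_mem_HS_zero_zero (pderiv_inl_mem_HS i hj) ?_
    rw [constantCoeff_pderiv_acL, h, Pi.zero_apply, mul_zero]

theorem aaL_eq_zero_iff (hx : x ∈ HS n 2 2) :
    aaL n x = 0 ↔ ∀ i j, ∑ k, mixedHessian x (s(i, k), s(j, k)) = 0 := by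
  refine ⟨fun h i j => ?_, fun h => ?_⟩
  · simpa [h] using constantCoeff_pderiv_aaL x i j
  · have h₀ := aaL_mem_HS hx
    refine eq_zero_of_pderiv_inr_eq_zero h₀ fun j => ?_
    have hj := pderiv_inr_mem_HS j h₀
    refine eq_zero_of_pderiv_inl_eq_zero hj fun i => ?_
    refine eq_zero_of_mem_HS_zero_zero (pderiv_inl_mem_HS i hj) ?_
    rw [constantCoeff_pderiv_aaL, h, mul_zero]

theorem eJ_single_add_single (k l : Fin n) :
    eJ (Pi.single k 1 + Pi.single l 1) = X (Sum.inr k) * X (Sum.inr l) := by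
  have hk : eJ (Pi.single k 1) = X (Sum.inr k) := by simpa [eJ_zero] using eJ_add_single k 0
  rw [eJ_add_single, hk, mul_comm]

theorem HI_single_add_single (i j : Fin n) :
    HI (Pi.single i 1 + Pi.single j 1) =
      (4 : ℝ) • (X (Sum.inl i) * X (Sum.inl j)) - C (if i = j then 2 else 0) := by
  have hi : HI (Pi.single i 1) = (2 : ℝ) • X (Sum.inl i) := by
    simpa [HI_zero, smul_eq_C_mul, map_ofNat C 2] using HI_add_single i 0
  have hpderiv : pderiv (Sum.inl j) (HI (Pi.single i 1)) = C (if i = j then 2 else 0) := by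
    obtain rfl | hij := eq_or_ne i j <;> simp [smul_eq_C_mul, *]
  rw [HI_add_single, hpderiv, hi, smul_eq_C_mul, smul_eq_C_mul, map_ofNat, map_ofNat]
  ring

theorem mixedHessian_HI_mul_eJ (I J : Fin n → ℕ) (a b c d : Fin n) :
    mixedHessian (HI I * eJ J) (s(a, b), s(c, d)) =
      constantCoeff (pderiv (Sum.inl a) (pderiv (Sum.inl b) (HI I))) *
        constantCoeff (pderiv (Sum.inr c) (pderiv (Sum.inr d) (eJ J))) := by
  simp only [mixedHessian_apply, pderiv_mul, pderiv_inr_HI, pderiv_inl_eJ,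
    pderiv_comm (Sum.inl _) (Sum.inr _), zero_mul, mul_zero, add_zero, zero_add, map_zero, map_mul]

theorem mixedHessian_HI_single_mul_eJ_single (i j k l a b c d : Fin n) :
    mixedHessian (HI (Pi.single i 1 + Pi.single j 1) * eJ (Pi.single k 1 + Pi.single l 1))
      (s(a, b), s(c, d)) =
    4 * ((if i = a ∧ j = b then 1 else 0) + if i = b ∧ j = a then 1 else 0) *
      ((if k = c ∧ l = d then 1 else 0) + if k = d ∧ l = c then 1 else 0) := by
  rw [mixedHessian_HI_mul_eJ, HI_single_add_single, eJ_single_add_single]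
  simp only [map_sub, Derivation.map_smul, pderiv_C, sub_zero, pderiv_pderiv_X_mul_X,
    constantCoeff_smul, constantCoeff_C, smul_eq_mul, Sum.inl.injEq, Sum.inr.injEq]

theorem exists_mem_HS_mixedHessian_eq (t : Sym2 (Fin n) × Sym2 (Fin n) → ℝ) :
    ∃ x ∈ HS n 2 2, mixedHessian x = t := by
  refine ⟨(1 / 16 : ℝ) • ∑ i, ∑ j, ∑ k, ∑ l, t (s(i, j), s(k, l)) •
    (HI (Pi.single i 1 + Pi.single j 1) * eJ (Pi.single k 1 + Pi.single l 1)), ?_, ?_⟩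
  · refine Submodule.smul_mem _ _ <| Submodule.sum_mem _ fun i _ => Submodule.sum_mem _ fun j _ =>
      Submodule.sum_mem _ fun k _ => Submodule.sum_mem _ fun l _ => Submodule.smul_mem _ _ <|
      HI_mul_eJ_mem_HS ?_ ?_ <;> simp [Finset.sum_add_distrib]
  · ext ⟨r, s⟩
    induction r with | _ a b
    induction s with | _ c d
    simp only [map_smul, map_sum, Pi.smul_apply, Finset.sum_apply,
      mixedHessian_HI_single_mul_eJ_single, ite_and, mul_add, mul_ite, mul_one, mul_zero,
      smul_eq_mul, Finset.sum_add_distrib, Finset.sum_ite_irrel, Finset.sum_ite_eq',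
      Finset.mem_univ, if_true, Finset.sum_const_zero, Sym2.eq_swap (a := d) (b := c),
      Sym2.eq_swap (a := b) (b := a)]
    ring

theorem mem_HS_inf_ker_inf_ker_iff (hx : x ∈ HS n 2 2) :
    x ∈ HS n 2 2 ⊓ LinearMap.ker (aaL n) ⊓ LinearMap.ker (acL n) ↔
      mixedHessian x ∈ weylTensors (Fin n) ℝ := by
  rw [Submodule.mem_inf, Submodule.mem_inf, LinearMap.mem_ker, LinearMap.mem_ker,
    acL_eq_zero_iff hx, aaL_eq_zero_iff hx, mem_weylTensors, and_iff_right hx, and_comm]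
  exact and_congr_right forall_trace_eq_zero_iff_ricci_eq_zero

variable (n) in
/-- The Hermite expansion identifies `K^{2,2} = ker Aa ∩ ker Ac` with the space of Weyl tensors. -/
noncomputable def kerEquivWeylTensors :
    ↥(HS n 2 2 ⊓ LinearMap.ker (aaL n) ⊓ LinearMap.ker (acL n)) ≃ₗ[ℝ] weylTensors (Fin n) ℝ :=
  LinearEquiv.ofBijective
    (mixedHessian.restrict fun x (hx : x ∈ HS n 2 2 ⊓ _ ⊓ _) =>
      (mem_HS_inf_ker_inf_ker_iff hx.1.1).1 hx) <| by
    refine ⟨(injective_iff_map_eq_zero _).2 fun x hx => ?_, fun t => ?_⟩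
    · exact Subtype.ext (eq_zero_of_mixedHessian_eq_zero x.2.1.1 (congrArg Subtype.val hx))
    · obtain ⟨x, hx, hxt⟩ := exists_mem_HS_mixedHessian_eq t.1
      exact ⟨⟨x, (mem_HS_inf_ker_inf_ker_iff hx).2 (hxt ▸ t.2)⟩, Subtype.ext hxt⟩

end MixedHessian

/-- for `n ≥ 3`, `K^{2,2} = ker Aa ∩ ker Ac ⊆ 𝓗²⊗S²` has dimension
`C(n+1,2)² − n·C(n+2,3) − C(n+1,2)`, and `K^{2,2} = 0` for `n = 1, 2`. -/
theorem stmt_16 (n : ℕ) :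
    (3 ≤ n →
      Module.finrank ℝ
          ↥(HS n 2 2 ⊓ LinearMap.ker (aaL n) ⊓ LinearMap.ker (acL n)) =
        ((n + 1).choose 2) ^ 2 - n * (n + 2).choose 3 - (n + 1).choose 2) ∧
    (n = 1 ∨ n = 2 →
      HS n 2 2 ⊓ LinearMap.ker (aaL n) ⊓ LinearMap.ker (acL n) = ⊥) := by
  refine ⟨fun hn => ?_, fun hn => ?_⟩
  · have hdim := finrank_weylTensors (ι := Fin n) (K := ℝ) (by simpa using hn)
    rw [Fintype.card_fin] at hdim
    rw [(kerEquivWeylTensors n).finrank_eq]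
    lia
  · have hweyl : weylTensors (Fin n) ℝ = ⊥ := weylTensors_eq_bot (by rw [Fintype.card_fin]; lia)
    rw [← Submodule.subsingleton_iff_eq_bot] at hweyl ⊢
    exact (kerEquivWeylTensors n).toEquiv.subsingleton
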